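/- arXiv:1906.04477 — 3 statements merged into one kernel-verified Lean document; each statement's English description precedes it below -/
import Mathlib

section
/- (Proposition 1, reverse direction under strict inequality.) Let d : ℕ, let S be a score function on binary adjacency matrices of size d, let S* be the minimum of S over acyclic binary adjacency matrices, and let hmin > 0 satisfy hmin ≤ h(A) for every non-acyclic binary adjacency matrix A. Assume S_L ≤ S(A) for every binary adjacency matrix A, S* ≤ S_U, λ1 ≥ 0, λ2 ≥ 0 and λ1 + λ2·hmin > S_U − S_L. Then every binary adjacency matrix A that minimizes the penalized objective F over all binary adjacency matrices is acyclic and satisfies S(A) = S*. -/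
/-- A binary adjacency matrix: every entry is 0 or 1. -/
def IsBinary {d : ℕ} (A : Matrix (Fin d) (Fin d) ℝ) : Prop :=
  ∀ i j, A i j = 0 ∨ A i j = 1

/-- The directed graph induced by `A` (edge `i → j` iff `A i j = 1`) is acyclic. -/
def IsAcyclicMat {d : ℕ} (A : Matrix (Fin d) (Fin d) ℝ) : Prop :=
  Irreflexive (Relation.TransGen (fun i j => A i j = 1))

/-- The smooth acyclicity function `h(A) = trace (exp A) - d`. -/
noncomputable def hAcyc {d : ℕ} (A : Matrix (Fin d) (Fin d) ℝ) : ℝ :=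
  Matrix.trace (NormedSpace.exp A) - d

open Classical in
/-- The penalized objective `F(A) = S(A) + λ₁·1[A ∉ DAGs] + λ₂·h(A)`. -/
noncomputable def penObj {d : ℕ} (S : Matrix (Fin d) (Fin d) ℝ → ℝ) (lam1 lam2 : ℝ)
    (A : Matrix (Fin d) (Fin d) ℝ) : ℝ :=
  S A + lam1 * (if IsAcyclicMat A then (0 : ℝ) else 1) + lam2 * hAcyc A

theorem transGen_of_pow_ne {d : ℕ} (A : Matrix (Fin d) (Fin d) ℝ) (hA : IsBinary A) (k : ℕ) :
    ∀ i j, (A ^ (k + 1)) i j ≠ 0 → Relation.TransGen (fun i j => A i j = 1) i j := by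
  induction k with
  | zero =>
    intro i j h
    rw [zero_add, pow_one] at h
    exact Relation.TransGen.single ((hA i j).resolve_left h)
  | succ k ih =>
    intro i j h
    rw [pow_succ, Matrix.mul_apply] at h
    obtain ⟨m, -, hm⟩ := Finset.exists_ne_zero_of_sum_ne_zero h
    exact Relation.TransGen.tail (ih i m (left_ne_zero_of_mul hm))
      ((hA m j).resolve_left (right_ne_zero_of_mul hm))

attribute [local instance] Matrix.linftyOpNormedRing Matrix.linftyOpNormedAlgebra in
theorem hasSum_exp_mat {d : ℕ} (A : Matrix (Fin d) (Fin d) ℝ) :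
    HasSum (fun n : ℕ => ((n.factorial : ℝ)⁻¹) • A ^ n) (NormedSpace.exp A) :=
  NormedSpace.exp_series_hasSum_exp' (𝕂 := ℝ) A

theorem hAcyc_eq_zero {d : ℕ} (A : Matrix (Fin d) (Fin d) ℝ) (hA : IsBinary A)
    (hac : IsAcyclicMat A) : hAcyc A = 0 := by
  have h1 := (hasSum_exp_mat A).map (Matrix.traceAddMonoidHom (Fin d) ℝ)
    (continuous_id.matrix_trace)
  have h2 := hasSum_single (f := (Matrix.traceAddMonoidHom (Fin d) ℝ) ∘
      (fun n : ℕ => ((n.factorial : ℝ)⁻¹) • A ^ n)) 0 (by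
    intro n hn
    obtain ⟨k, rfl⟩ := Nat.exists_eq_succ_of_ne_zero hn
    have : Matrix.trace (A ^ (k + 1)) = 0 := by
      refine Finset.sum_eq_zero fun i _ => ?_
      by_contra hne
      exact absurd (transGen_of_pow_ne A hA k i i hne) (by first | exact hac i | exact hac.irrefl i)
    simp [this])
  have h3 := h1.unique h2
  simp at h3
  simp [hAcyc, h3]

theorem prop1_reverse (d : ℕ) (S : Matrix (Fin d) (Fin d) ℝ → ℝ)
    (Sstar SL SU hmin lam1 lam2 : ℝ)
    (hSstar : IsLeast {s : ℝ | ∃ A : Matrix (Fin d) (Fin d) ℝ,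
        IsBinary A ∧ IsAcyclicMat A ∧ S A = s} Sstar)
    (hminpos : 0 < hmin)
    (hminle : ∀ A : Matrix (Fin d) (Fin d) ℝ, IsBinary A → ¬ IsAcyclicMat A → hmin ≤ hAcyc A)
    (hSL : ∀ A : Matrix (Fin d) (Fin d) ℝ, IsBinary A → SL ≤ S A)
    (hSU : Sstar ≤ SU)
    (hl1 : 0 ≤ lam1) (hl2 : 0 ≤ lam2)
    (hpen : SU - SL < lam1 + lam2 * hmin) :
    ∀ A : Matrix (Fin d) (Fin d) ℝ, IsBinary A →
      (∀ A' : Matrix (Fin d) (Fin d) ℝ, IsBinary A' →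
        penObj S lam1 lam2 A ≤ penObj S lam1 lam2 A') →
      IsAcyclicMat A ∧ S A = Sstar := by
  intro A hA hmin'
  obtain ⟨⟨B, hB, hBac, hBS⟩, hlb⟩ := hSstar
  have hAB := hmin' B hB
  have hB0 := hAcyc_eq_zero B hB hBac
  by_cases hac : IsAcyclicMat A
  · have hA0 := hAcyc_eq_zero A hA hac
    simp only [penObj, hB0, hA0, hac, hBac, if_true] at hAB
    have := hlb ⟨A, hA, hac, rfl⟩
    exact ⟨hac, by linarith⟩
  · exfalso
    simp only [penObj, hB0, hac, hBac, if_true, if_false] at hAB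
    have h1 := mul_le_mul_of_nonneg_left (hminle A hA hac) hl2
    have h2 := hSL A hA
    linarith
end

section
/- (The smooth acyclicity characterization, Eq. (4), on which the reward's penalty terms are based.) Let d : ℕ and let A : Matrix (Fin d) (Fin d) ℝ be a binary adjacency matrix. Then A is acyclic if and only if trace(Matrix.exp A) − d = 0, i.e., h(A) = 0. -/
theorem aux_pow_nonneg {d : ℕ} (A : Matrix (Fin d) (Fin d) ℝ) (hA : IsBinary A) (n : ℕ) :
    ∀ i j, 0 ≤ (A ^ n) i j := by
  induction n with
  | zero =>
    intro i j
    rw [pow_zero, Matrix.one_apply]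
    split_ifs <;> norm_num
  | succ n ih =>
    intro i j
    rw [pow_succ, Matrix.mul_apply]
    refine Finset.sum_nonneg fun k _ => mul_nonneg (ih i k) ?_
    rcases hA k j with h | h <;> rw [h]
    exact zero_le_one

theorem aux_pos_of_trans {d : ℕ} (A : Matrix (Fin d) (Fin d) ℝ) (hA : IsBinary A) (i j : Fin d)
    (h : Relation.TransGen (fun i j => A i j = 1) i j) : ∃ n : ℕ, 0 < (A ^ (n + 1)) i j := by
  induction h with
  | single h => exact ⟨0, by simp [h]⟩
  | @tail b c _ hbc ih =>
    obtain ⟨n, hn⟩ := ih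
    refine ⟨n + 1, ?_⟩
    rw [pow_succ, Matrix.mul_apply]
    refine Finset.sum_pos' (fun k _ => mul_nonneg (aux_pow_nonneg A hA _ i k) ?_)
      ⟨b, Finset.mem_univ _, ?_⟩
    · rcases hA k c with h | h <;> rw [h]
      exact zero_le_one
    · rw [hbc, mul_one]
      exact hn

theorem aux_trans_of_ne {d : ℕ} (A : Matrix (Fin d) (Fin d) ℝ) (hA : IsBinary A) (n : ℕ) :
    ∀ i j, (A ^ (n + 1)) i j ≠ 0 → Relation.TransGen (fun i j => A i j = 1) i j := by
  induction n with
  | zero =>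
    intro i j h
    rw [zero_add, pow_one] at h
    exact .single ((hA i j).resolve_left h)
  | succ n ih =>
    intro i j h
    rw [pow_succ, Matrix.mul_apply] at h
    obtain ⟨k, _, hk⟩ := Finset.exists_ne_zero_of_sum_ne_zero h
    exact .tail (ih i k (left_ne_zero_of_mul hk))
      ((hA k j).resolve_left (right_ne_zero_of_mul hk))

open scoped Nat in
theorem aux_hasSum {d : ℕ} (A : Matrix (Fin d) (Fin d) ℝ) :
    HasSum (fun n : ℕ => ((n !⁻¹ : ℝ)) * Matrix.trace (A ^ n))
      (Matrix.trace (NormedSpace.exp A)) := by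
  have h : HasSum (fun n : ℕ => ((n !⁻¹ : ℝ)) • A ^ n) (NormedSpace.exp A) := by
    let : NormedRing (Matrix (Fin d) (Fin d) ℝ) := Matrix.linftyOpNormedRing
    let : NormedAlgebra ℝ (Matrix (Fin d) (Fin d) ℝ) := Matrix.linftyOpNormedAlgebra
    exact NormedSpace.exp_series_hasSum_exp' (𝕂 := ℝ) A
  have h2 := h.map (Matrix.traceAddMonoidHom (Fin d) ℝ) (continuous_id.matrix_trace)
  convert h2 using 1
  · funext n
    simp [Matrix.trace_smul]
  · rfl

theorem acyclic_iff_h_eq_zero (d : ℕ) (A : Matrix (Fin d) (Fin d) ℝ) (hA : IsBinary A) :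
    IsAcyclicMat A ↔ Matrix.trace (NormedSpace.exp A) - (d : ℝ) = 0 := by
  have hs := (hasSum_nat_add_iff' 1).2 (aux_hasSum A)
  simp only [Finset.sum_range_one, Nat.factorial_zero, Nat.cast_one, inv_one, pow_zero,
    Matrix.trace_one, Fintype.card_fin, one_mul] at hs
  have hnn : ∀ n : ℕ, 0 ≤ Matrix.trace (A ^ n) := fun n =>
    Finset.sum_nonneg fun i _ => aux_pow_nonneg A hA n i i
  constructor
  · intro hac
    refine hs.unique ?_
    convert hasSum_zero with n
    refine mul_eq_zero_of_right _ (Finset.sum_eq_zero fun i _ => ?_)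
    by_contra hne
    exact hac i (aux_trans_of_ne A hA n i i hne)
  · intro h0 i hi
    obtain ⟨n, hn⟩ := aux_pos_of_trans A hA i i hi
    rw [h0, hasSum_zero_iff_of_nonneg (fun n => mul_nonneg (by positivity) (hnn _))] at hs
    have h1 := congrFun hs n
    have h2 : 0 < Matrix.trace (A ^ (n + 1)) :=
      Finset.sum_pos' (fun i _ => aux_pow_nonneg A hA _ i i) ⟨i, Finset.mem_univ _, hn⟩
    have h3 : 0 < (((n + 1).factorial : ℝ))⁻¹ := by positivity
    exact (mul_pos h3 h2).ne' h1
end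

section
/- (Weighted smooth acyclicity constraint used in Appendix E.2: trace(e^{W∘W}) − d = 0 enforces acyclicity of the weighted adjacency matrix.) Let d : ℕ and let W : Matrix (Fin d) (Fin d) ℝ be an arbitrary real matrix. Then trace(Matrix.exp (W ∘ W)) ≥ d, where W ∘ W denotes the entrywise (Hadamard) product of W with itself; and equality trace(Matrix.exp (W ∘ W)) = d holds if and only if the directed graph on Fin d with an edge from i to j iff W i j ≠ 0 has no directed cycle, i.e., the transitive closure Relation.TransGen (fun i j => W i j ≠ 0) is irreflexive. -/
theorem had_nonneg {d : ℕ} (W : Matrix (Fin d) (Fin d) ℝ) (n : ℕ) (i j : Fin d) :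
    0 ≤ ((Matrix.hadamard W W) ^ n) i j := by
  induction n generalizing i j with
  | zero =>
    rw [pow_zero, Matrix.one_apply]
    split_ifs <;> norm_num
  | succ n ih =>
    rw [pow_succ, Matrix.mul_apply]
    exact Finset.sum_nonneg fun k _ => mul_nonneg (ih i k) (mul_self_nonneg _)

theorem had_pos_of_transGen {d : ℕ} (W : Matrix (Fin d) (Fin d) ℝ) {i j : Fin d}
    (h : Relation.TransGen (fun i j => W i j ≠ 0) i j) :
    ∃ n : ℕ, 0 < ((Matrix.hadamard W W) ^ (n + 1)) i j := by
  induction h with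
  | single h =>
    refine ⟨0, ?_⟩
    rw [zero_add, pow_one]
    exact mul_self_pos.2 h
  | @tail b c _ h ih =>
    obtain ⟨n, hn⟩ := ih
    refine ⟨n + 1, ?_⟩
    rw [pow_succ, Matrix.mul_apply]
    exact Finset.sum_pos' (fun k _ => mul_nonneg (had_nonneg W _ i k) (mul_self_nonneg _))
      ⟨b, Finset.mem_univ _, mul_pos hn (mul_self_pos.2 h)⟩

theorem had_transGen_of_ne {d : ℕ} (W : Matrix (Fin d) (Fin d) ℝ) (n : ℕ) (i j : Fin d)
    (h : ((Matrix.hadamard W W) ^ (n + 1)) i j ≠ 0) :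
    Relation.TransGen (fun i j => W i j ≠ 0) i j := by
  induction n generalizing j with
  | zero =>
    rw [zero_add, pow_one] at h
    exact Relation.TransGen.single fun h0 => h (by simp [Matrix.hadamard_apply, h0])
  | succ n ih =>
    rw [pow_succ, Matrix.mul_apply] at h
    obtain ⟨k, _, hk⟩ := Finset.exists_ne_zero_of_sum_ne_zero h
    exact (ih k (left_ne_zero_of_mul hk)).tail
      fun h0 => right_ne_zero_of_mul hk (by simp [Matrix.hadamard_apply, h0])

theorem hasSum_trace_exp {d : ℕ} (A : Matrix (Fin d) (Fin d) ℝ) :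
    HasSum (fun n : ℕ => ((n.factorial : ℝ)⁻¹) * (A ^ n).trace)
      (NormedSpace.exp A).trace := by
  have h : HasSum (fun n : ℕ => ((n.factorial : ℝ)⁻¹) • A ^ n) (NormedSpace.exp A) := by
    let : NormedRing (Matrix (Fin d) (Fin d) ℝ) := Matrix.linftyOpNormedRing
    let : NormedAlgebra ℝ (Matrix (Fin d) (Fin d) ℝ) := Matrix.linftyOpNormedAlgebra
    exact NormedSpace.exp_series_hasSum_exp' (𝕂 := ℝ) A
  have h2 := h.map (Matrix.traceAddMonoidHom (Fin d) ℝ) (continuous_id.matrix_trace)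
  simpa [Function.comp_def, Matrix.trace_smul] using h2

theorem hadamard_acyclicity (d : ℕ) (W : Matrix (Fin d) (Fin d) ℝ) :
    (d : ℝ) ≤ Matrix.trace (NormedSpace.exp (Matrix.hadamard W W)) ∧
    (Matrix.trace (NormedSpace.exp (Matrix.hadamard W W)) = (d : ℝ) ↔
      Irreflexive (Relation.TransGen (fun i j => W i j ≠ 0))) := by
  have hs := (hasSum_nat_add_iff' 1).2 (hasSum_trace_exp (Matrix.hadamard W W))
  simp only [Finset.sum_range_one, Nat.factorial_zero, Nat.cast_one, inv_one, one_mul, pow_zero,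
    Matrix.trace_one, Fintype.card_fin] at hs
  have htr : ∀ n : ℕ, 0 ≤ ((Matrix.hadamard W W) ^ n).trace := fun n =>
    Finset.sum_nonneg fun i _ => had_nonneg W n i i
  have hnn : ∀ n : ℕ, 0 ≤ (((n + 1).factorial : ℝ)⁻¹) * ((Matrix.hadamard W W) ^ (n + 1)).trace :=
    fun n => mul_nonneg (by positivity) (htr _)
  refine ⟨sub_nonneg.1 (hs.nonneg hnn), ?_, ?_⟩
  · intro he i hi
    obtain ⟨n, hn⟩ := had_pos_of_transGen W hi
    rw [he, sub_self] at hs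
    have h0 := congrFun ((hasSum_zero_iff_of_nonneg hnn).1 hs) n
    have hp : 0 < ((Matrix.hadamard W W) ^ (n + 1)).trace :=
      Finset.sum_pos' (fun k _ => had_nonneg W _ k k) ⟨i, Finset.mem_univ _, hn⟩
    have hq : 0 < (((n + 1).factorial : ℝ)⁻¹) * ((Matrix.hadamard W W) ^ (n + 1)).trace :=
      mul_pos (by positivity) hp
    exact hq.ne' h0
  · intro hir
    have hz : ∀ n : ℕ, ((Matrix.hadamard W W) ^ (n + 1)).trace = 0 := fun n =>
      Finset.sum_eq_zero fun i _ => by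
        by_contra h
        exact hir i (had_transGen_of_ne W n i i h)
    simp only [hz, mul_zero] at hs
    exact sub_eq_zero.1 (hs.unique hasSum_zero)
end
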